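/- For every n ≥ 1 and all integers i, j, there exists γ ∈ Φ(n) such that γ, applied as a matrix to the column vector (2(i+j)+1, 1) (which represents the cusp A^{i+j}·1), yields the vector (1+2i(2j+1), 2j+1) or its negative (which represents the cusp A^iB^j·1). In other words, the cusps A^iB^j·1 and A^{i+j}·1 define the same point of the quotient of the extended upper half plane by Φ(n). -/

import Mathlib

/-!
Both `B⁻¹` and `A⁻¹` send the cusp `1` to `-1`, so `T = A B⁻¹` fixes the cusp `1`; on vectors,
`T (1,1) = -(1,1)`. Hence `A^i B^j · 1 = A^i B^j T^j · 1`, and in the abelianization of `Γ(2)` the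
element `A^i B^j T^j` has the same class as `A^(i+j)`. The matrix
`γ = A^i B^j T^j A^(-(i+j))` therefore lies in the commutator subgroup of `Γ(2)`, which is contained
in `Φ(n)`, and it carries `A^(i+j) · 1` to `A^i B^j · 1`.
-/

open Matrix

/-- `Γ(2)`, the principal congruence subgroup of level 2 in `SL(2, ℤ)`. -/
def Gamma2 : Subgroup (Matrix.SpecialLinearGroup (Fin 2) ℤ) := CongruenceSubgroup.Gamma 2

/-- The matrix `A = [[1,2],[0,1]]` in `SL(2, ℤ)`. -/
def Amat : Matrix.SpecialLinearGroup (Fin 2) ℤ :=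
  ⟨!![1, 2; 0, 1], by norm_num [Matrix.det_fin_two_of]⟩

/-- The matrix `B = [[1,0],[2,1]]` in `SL(2, ℤ)`. -/
def Bmat : Matrix.SpecialLinearGroup (Fin 2) ℤ :=
  ⟨!![1, 0; 2, 1], by norm_num [Matrix.det_fin_two_of]⟩

/-- The Fermat group `Φ(n)`: the subgroup of `SL(2, ℤ)` generated by `A^n`, `B^n` and the
commutator subgroup `Γ(2)'` of `Γ(2)`. -/
def Phi (n : ℕ) : Subgroup (Matrix.SpecialLinearGroup (Fin 2) ℤ) :=
  Subgroup.closure {Amat ^ n, Bmat ^ n} ⊔ ⁅Gamma2, Gamma2⁆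

/-- `Φ±(n)`: the subgroup of `SL(2, ℤ)` generated by `A^n`, `B^n`, `-I` and the commutator
subgroup of `Γ(2)`; the preimage in `SL(2, ℤ)` of the image of `Φ(n)` in `PSL(2, ℤ)`. -/
def PhiPM (n : ℕ) : Subgroup (Matrix.SpecialLinearGroup (Fin 2) ℤ) :=
  Subgroup.closure {Amat ^ n, Bmat ^ n, -1} ⊔ ⁅Gamma2, Gamma2⁆

lemma Amat_mem_Gamma2 : Amat ∈ Gamma2 := by
  rw [Gamma2, CongruenceSubgroup.Gamma_mem]
  refine ⟨?_, ?_, ?_, ?_⟩ <;> simp [Amat]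
  all_goals decide

lemma Bmat_mem_Gamma2 : Bmat ∈ Gamma2 := by
  rw [Gamma2, CongruenceSubgroup.Gamma_mem]
  refine ⟨?_, ?_, ?_, ?_⟩ <;> simp [Bmat]
  all_goals decide

lemma Amat_zpow (k : ℤ) :
    ((Amat ^ k : Matrix.SpecialLinearGroup (Fin 2) ℤ) : Matrix (Fin 2) (Fin 2) ℤ)
      = !![1, 2 * k; 0, 1] := by
  induction k using Int.induction_on with
  | zero => simp [Matrix.one_fin_two]
  | succ k ih =>
    rw [_root_.zpow_add_one, Matrix.SpecialLinearGroup.coe_mul, ih]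
    simp [Amat]
    ring
  | pred k ih =>
    rw [_root_.zpow_sub_one, Matrix.SpecialLinearGroup.coe_mul, ih,
      Matrix.SpecialLinearGroup.coe_inv]
    simp [Amat, Matrix.adjugate_fin_two]
    ring

lemma Bmat_zpow (k : ℤ) :
    ((Bmat ^ k : Matrix.SpecialLinearGroup (Fin 2) ℤ) : Matrix (Fin 2) (Fin 2) ℤ)
      = !![1, 0; 2 * k, 1] := by
  induction k using Int.induction_on with
  | zero => simp [Matrix.one_fin_two]
  | succ k ih =>
    rw [_root_.zpow_add_one, Matrix.SpecialLinearGroup.coe_mul, ih]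
    simp [Bmat]
    ring
  | pred k ih =>
    rw [_root_.zpow_sub_one, Matrix.SpecialLinearGroup.coe_mul, ih,
      Matrix.SpecialLinearGroup.coe_inv]
    simp [Bmat, Matrix.adjugate_fin_two]
    ring

/-- The powers of `A B⁻¹ = [[-3,2],[-2,1]]` fix the cusp `1`: `-A B⁻¹` is parabolic with fixed
vector `(1,1)`. -/
lemma stabilizer_zpow_mulVec (k : ℤ) :
    (((Amat * Bmat⁻¹) ^ k : Matrix.SpecialLinearGroup (Fin 2) ℤ) : Matrix (Fin 2) (Fin 2) ℤ)
        *ᵥ ![1, 1] = ![1, 1] ∨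
    (((Amat * Bmat⁻¹) ^ k : Matrix.SpecialLinearGroup (Fin 2) ℤ) : Matrix (Fin 2) (Fin 2) ℤ)
        *ᵥ ![1, 1] = -![1, 1] := by
  have h1 : ((Amat * Bmat⁻¹ : Matrix.SpecialLinearGroup (Fin 2) ℤ) :
      Matrix (Fin 2) (Fin 2) ℤ) *ᵥ ![1, 1] = -![1, 1] := by
    rw [Matrix.SpecialLinearGroup.coe_mul, Matrix.SpecialLinearGroup.coe_inv]
    ext x
    fin_cases x <;> simp [Amat, Bmat, Matrix.adjugate_fin_two, Matrix.mulVec, dotProduct]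
  have h2 : (((Amat * Bmat⁻¹)⁻¹ : Matrix.SpecialLinearGroup (Fin 2) ℤ) :
      Matrix (Fin 2) (Fin 2) ℤ) *ᵥ ![1, 1] = -![1, 1] := by
    rw [_root_.mul_inv_rev, inv_inv, Matrix.SpecialLinearGroup.coe_mul,
      Matrix.SpecialLinearGroup.coe_inv]
    ext x
    fin_cases x <;> simp [Amat, Bmat, Matrix.adjugate_fin_two, Matrix.mulVec, dotProduct]
  induction k using Int.induction_on with
  | zero => left; simp
  | succ k ih =>
    rw [_root_.zpow_add_one, Matrix.SpecialLinearGroup.coe_mul, ← Matrix.mulVec_mulVec, h1,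
      Matrix.mulVec_neg, neg_inj, neg_eq_iff_eq_neg]
    exact ih.symm
  | pred k ih =>
    rw [_root_.zpow_sub_one, Matrix.SpecialLinearGroup.coe_mul, ← Matrix.mulVec_mulVec, h2,
      Matrix.mulVec_neg, neg_inj, neg_eq_iff_eq_neg]
    exact ih.symm

/-- The word below has trivial exponent sum in each of `a` and `b`. -/
lemma word_mem_commutator {G : Type*} [Group G] (a b : G) (i j : ℤ) :
    a ^ i * b ^ j * (a * b⁻¹) ^ j * a ^ (-(i + j)) ∈ commutator G := by
  rw [← Abelianization.ker_of, MonoidHom.mem_ker]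
  simp only [map_mul, map_zpow, map_inv, mul_zpow, _root_.zpow_neg, _root_.zpow_add, _root_.inv_zpow]
  generalize (Abelianization.of a) ^ i = x
  generalize (Abelianization.of a) ^ j = y
  generalize (Abelianization.of b) ^ j = z
  rw [mul_inv_eq_one, mul_mul_mul_comm, mul_inv_cancel, mul_one]

lemma word_mem_Phi (n : ℕ) (i j : ℤ) :
    Amat ^ i * Bmat ^ j * (Amat * Bmat⁻¹) ^ j * Amat ^ (-(i + j)) ∈ Phi n := by
  refine (le_sup_right : ⁅Gamma2, Gamma2⁆ ≤ Phi n) ?_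
  rw [← Subgroup.map_subtype_commutator]
  exact ⟨_, word_mem_commutator (⟨Amat, Amat_mem_Gamma2⟩ : Gamma2) ⟨Bmat, Bmat_mem_Gamma2⟩ i j, rfl⟩

/-- For every `n ≥ 1` and all integers `i, j`, some `γ ∈ Φ(n)` carries the primitive vector
`(2(i+j)+1, 1)` (representing the cusp `A^{i+j}·1`) to `±(1+2i(2j+1), 2j+1)` (representing the
cusp `A^iB^j·1`); i.e. the cusps `A^iB^j·1` and `A^{i+j}·1` agree on the quotient by `Φ(n)`. -/
theorem cusp_AiBj_eq_Aij (n : ℕ) (hn : 1 ≤ n) (i j : ℤ) :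
    ∃ γ ∈ Phi n,
      (γ : Matrix (Fin 2) (Fin 2) ℤ) *ᵥ ![2 * (i + j) + 1, 1] = ![1 + 2 * i * (2 * j + 1), 2 * j + 1] ∨
      (γ : Matrix (Fin 2) (Fin 2) ℤ) *ᵥ ![2 * (i + j) + 1, 1] = -![1 + 2 * i * (2 * j + 1), 2 * j + 1] := by
  refine ⟨_, word_mem_Phi n i j, ?_⟩
  have hA : ((Amat ^ (-(i + j)) : Matrix.SpecialLinearGroup (Fin 2) ℤ) :
      Matrix (Fin 2) (Fin 2) ℤ) *ᵥ ![2 * (i + j) + 1, 1] = ![1, 1] := by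
    rw [Amat_zpow]
    ext x
    fin_cases x <;> simp
    ring
  have hAB : ((Amat ^ i * Bmat ^ j : Matrix.SpecialLinearGroup (Fin 2) ℤ) :
      Matrix (Fin 2) (Fin 2) ℤ) *ᵥ ![1, 1] = ![1 + 2 * i * (2 * j + 1), 2 * j + 1] := by
    rw [Matrix.SpecialLinearGroup.coe_mul, Amat_zpow, Bmat_zpow]
    ext x
    fin_cases x <;> simp
    ring
  rw [Matrix.SpecialLinearGroup.coe_mul, ← Matrix.mulVec_mulVec, hA,
    Matrix.SpecialLinearGroup.coe_mul, ← Matrix.mulVec_mulVec]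
  rcases stabilizer_zpow_mulVec j with h | h
  · left
    rw [h, hAB]
  · right
    rw [h, Matrix.mulVec_neg, hAB]
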